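/- arXiv:2412.12987 — 6 statements merged into one kernel-verified Lean document; each statement's English description precedes it below -/
import Mathlib

section
/- Let μ > 0 and suppose the pair (x, λ) ∈ Ω° × ℝ^m satisfies ‖∇φ_μ(x) + Aᵀλ‖_x^* ≤ μ. Then, setting λ̃ = λ/(1+μ), the point x satisfies the approximate first-order optimality conditions: x ∈ int K, Ax = b, ∇f(x) + Aᵀλ̃ ∈ K^*, and ‖∇f(x) + Aᵀλ̃‖_x^* ≤ ε for every ε ≥ (1+√ϑ)μ. -/
open Matrix MeasureTheory ProbabilityTheory

noncomputable section

/-- The local norm `‖v‖ₓ = (vᵀ ∇²B(x) v)^{1/2}` induced by `H = ∇²B(x)`. -/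
def locNorm {n : ℕ} (H : Matrix (Fin n) (Fin n) ℝ) (v : Fin n → ℝ) : ℝ :=
  Real.sqrt (v ⬝ᵥ (H *ᵥ v))

/-- The dual local norm `‖v‖ₓ* = (vᵀ ∇²B(x)⁻¹ v)^{1/2}`. -/
def dualNorm {n : ℕ} (H : Matrix (Fin n) (Fin n) ℝ) (v : Fin n → ℝ) : ℝ :=
  Real.sqrt (v ⬝ᵥ (H⁻¹ *ᵥ v))

/-- The induced local norm of a matrix: `‖M‖ₓ* = max_{‖v‖ₓ ≤ 1} ‖M v‖ₓ*`. -/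
def matDualNorm {n : ℕ} (H M : Matrix (Fin n) (Fin n) ℝ) : ℝ :=
  sSup ((fun v => dualNorm H (M *ᵥ v)) '' {v | locNorm H v ≤ 1})

/-- The strictly feasible region `Ω° = {x ∈ int 𝒦 : A x = b}`. -/
def strictFeas {n m : ℕ} (Kc : Set (Fin n → ℝ)) (A : Matrix (Fin m) (Fin n) ℝ)
    (b : Fin m → ℝ) : Set (Fin n → ℝ) :=
  {x | x ∈ interior Kc ∧ A *ᵥ x = b}

/-- The perturbed barrier function `φ_μ(x) = f(x) + μ (f(x) + B(x))`. -/
def phiMu {n : ℕ} (f Bf : (Fin n → ℝ) → ℝ) (μ : ℝ) (x : Fin n → ℝ) : ℝ :=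
  f x + μ * (f x + Bf x)

/-- The gradient of `φ_μ`: `∇φ_μ(x) = (1+μ) ∇f(x) + μ ∇B(x)`. -/
def gradPhiMu {n : ℕ} (Gf gradB : (Fin n → ℝ) → Fin n → ℝ) (μ : ℝ)
    (x : Fin n → ℝ) : Fin n → ℝ :=
  (1 + μ) • Gf x + μ • gradB x

/-- `Δ(x) = f(x) + [f(x)+B(x)]₊ − 2 [φ_low]₋`. -/
def DeltaFn {n : ℕ} (f Bf : (Fin n → ℝ) → ℝ) (philow : ℝ) (x : Fin n → ℝ) : ℝ :=
  f x + max (f x + Bf x) 0 - 2 * min philow 0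

/-- The σ-algebra generated by the samples `ξ⁰, …, ξᵏ`. -/
def sampleFilt {Θ Ξ : Type} [MeasurableSpace Ξ] (ξ : ℕ → Θ → Ξ) (k : ℕ) :
    MeasurableSpace Θ :=
  ⨆ i ∈ Finset.range (k + 1), MeasurableSpace.comap (ξ i) inferInstance

/-- The σ-algebra generated by the sample batches `𝓑₀, …, 𝓑ₖ`. -/
def batchFilt {Θ Ξ : Type} [MeasurableSpace Ξ] {Bsz : ℕ → ℕ}
    (ξ : (k : ℕ) → Fin (Bsz k) → Θ → Ξ) (k : ℕ) : MeasurableSpace Θ :=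
  ⨆ j ∈ Finset.range (k + 1), ⨆ i, MeasurableSpace.comap (ξ j i) inferInstance

lemma dualNorm_eq_norm {n : ℕ} (H : Matrix (Fin n) (Fin n) ℝ) (hH : H.PosDef) :
    ∃ C : Matrix (Fin n) (Fin n) ℝ, ∀ v, dualNorm H v = ‖WithLp.toLp 2 (C *ᵥ v)‖ := by
  obtain ⟨C, hC⟩ : ∃ C : Matrix (Fin n) (Fin n) ℝ, H⁻¹ = Cᴴ * C := by
    open scoped MatrixOrder in
    exact CStarAlgebra.nonneg_iff_eq_star_mul_self.mp hH.inv.posSemidef.nonneg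
  refine ⟨C, fun v => ?_⟩
  rw [dualNorm, hC, EuclideanSpace.norm_eq, ← Matrix.mulVec_mulVec, Matrix.dotProduct_mulVec,
    Matrix.conjTranspose_eq_transpose_of_trivial, Matrix.vecMul_transpose]
  congr 1
  simp [dotProduct, sq]

lemma dualNorm_sub_le {n : ℕ} (H : Matrix (Fin n) (Fin n) ℝ) (hH : H.PosDef)
    (u v : Fin n → ℝ) : dualNorm H (u - v) ≤ dualNorm H u + dualNorm H v := by
  obtain ⟨C, hC⟩ := dualNorm_eq_norm H hH
  rw [hC, hC, hC, Matrix.mulVec_sub, WithLp.toLp_sub]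
  exact norm_sub_le _ _

lemma dualNorm_smul_pos {n : ℕ} (H : Matrix (Fin n) (Fin n) ℝ) (hH : H.PosDef)
    (t : ℝ) (ht : 0 ≤ t) (v : Fin n → ℝ) : dualNorm H (t • v) = t * dualNorm H v := by
  obtain ⟨C, hC⟩ := dualNorm_eq_norm H hH
  rw [hC, hC, Matrix.mulVec_smul, WithLp.toLp_smul, norm_smul, Real.norm_of_nonneg ht]

/-- **Lemma 1**: approximate optimality from the perturbed-barrier stationarity measure. -/
theorem stmt0 {n m : ℕ}
    (Kc : Set (Fin n → ℝ))
    (hKconv : Convex ℝ Kc) (hKclosed : IsClosed Kc)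
    (hKcone : ∀ t : ℝ, 0 < t → ∀ x ∈ Kc, t • x ∈ Kc)
    (hKpointed : ∀ x : Fin n → ℝ, x ∈ Kc → -x ∈ Kc → x = 0)
    (hKint : (interior Kc).Nonempty)
    (ϑ : ℝ) (hϑ : 1 ≤ ϑ)
    (Bf : (Fin n → ℝ) → ℝ) (gradB : (Fin n → ℝ) → Fin n → ℝ)
    (hessB : (Fin n → ℝ) → Matrix (Fin n) (Fin n) ℝ)
    (hBpos : ∀ x ∈ interior Kc, (hessB x).PosDef)
    (A : Matrix (Fin m) (Fin n) ℝ) (b : Fin m → ℝ) (hA : A.rank = m)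
    (f : (Fin n → ℝ) → ℝ) (Gf : (Fin n → ℝ) → Fin n → ℝ)
    (hf' : ∀ x ∈ strictFeas Kc A b, ∃ L : (Fin n → ℝ) →L[ℝ] ℝ,
      HasFDerivAt f L x ∧ ∀ v, L v = Gf x ⬝ᵥ v)
    -- LHSC barrier properties (assumed as hypotheses):
    (hthetaId : ∀ x ∈ interior Kc, (dualNorm (hessB x) (gradB x)) ^ 2 = ϑ)
    (hdualball : ∀ x ∈ interior Kc, ∀ s : Fin n → ℝ,
      dualNorm (hessB x) (s + gradB x) ≤ 1 → ∀ y ∈ Kc, 0 ≤ s ⬝ᵥ y)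
    (μ : ℝ) (hμ : 0 < μ)
    (x : Fin n → ℝ) (lam : Fin m → ℝ)
    (hx : x ∈ strictFeas Kc A b)
    (hbound : dualNorm (hessB x) (gradPhiMu Gf gradB μ x + Aᵀ *ᵥ lam) ≤ μ) :
    x ∈ interior Kc ∧ A *ᵥ x = b ∧
      (∀ y ∈ Kc, 0 ≤ (Gf x + Aᵀ *ᵥ ((1 + μ)⁻¹ • lam)) ⬝ᵥ y) ∧
      ∀ ε : ℝ, (1 + Real.sqrt ϑ) * μ ≤ ε →
        dualNorm (hessB x) (Gf x + Aᵀ *ᵥ ((1 + μ)⁻¹ • lam)) ≤ ε := by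
  obtain ⟨hxi, hxA⟩ := hx
  have hH := hBpos x hxi
  have h1 : (0 : ℝ) < 1 + μ := by linarith
  set g := Gf x + Aᵀ *ᵥ ((1 + μ)⁻¹ • lam) with hg
  set r := gradPhiMu Gf gradB μ x + Aᵀ *ᵥ lam with hr
  have hrg : r = (1 + μ) • g + μ • gradB x := by
    rw [hr, hg, gradPhiMu, Matrix.mulVec_smul, smul_add, smul_smul, mul_inv_cancel₀ h1.ne',
      one_smul]
    abel
  have hB : dualNorm (hessB x) (gradB x) = Real.sqrt ϑ := by
    have h0 : 0 ≤ dualNorm (hessB x) (gradB x) := Real.sqrt_nonneg _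
    rw [← hthetaId x hxi, Real.sqrt_sq h0]
  clear_value g r
  refine ⟨hxi, hxA, ?_, ?_⟩
  · intro y hy
    have hs : ((1 + μ) / μ) • g + gradB x = μ⁻¹ • r := by
      rw [hrg, smul_add, smul_smul, smul_smul, inv_mul_cancel₀ hμ.ne', one_smul,
        div_eq_inv_mul]
    have h := hdualball x hxi (((1 + μ) / μ) • g) (by
      rw [hs, dualNorm_smul_pos _ hH _ (inv_nonneg.mpr hμ.le), inv_mul_le_iff₀ hμ, mul_one]
      exact hbound) y hy
    rw [smul_dotProduct, smul_eq_mul] at h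
    exact nonneg_of_mul_nonneg_right h (div_pos h1 hμ)
  · intro ε hε
    have hs : (1 + μ) • g = r - μ • gradB x := by
      rw [hrg]; abel
    have h := dualNorm_sub_le _ hH r (μ • gradB x)
    rw [← hs, dualNorm_smul_pos _ hH _ h1.le, dualNorm_smul_pos _ hH _ hμ.le, hB] at h
    have h0 : 0 ≤ dualNorm (hessB x) g := Real.sqrt_nonneg _
    nlinarith [mul_nonneg hμ.le h0]
end
end

section
/- Let {x^k} and {z^k} be generated by SIPM-EM with step sizes {η_k} ⊂ (0, s_η] and momentum parameters {γ_k} ⊂ (0,1] satisfying η_k/γ_k ≤ s_η for all k ≥ 0, where s_η ∈ (0,1). Then z^k ∈ Ω° for all k ≥ 0 (for every realization of the samples). -/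
open Matrix MeasureTheory ProbabilityTheory

noncomputable section

theorem aux_vecMul_inj {n m : ℕ} (A : Matrix (Fin m) (Fin n) ℝ) (hA : A.rank = m) :
    Function.Injective A.vecMul := by
  have h : LinearIndependent ℝ A.row := by
    rw [linearIndependent_iff_card_eq_finrank_span, Set.finrank, ← A.rank_eq_finrank_span_row, hA]
    simp
  exact Matrix.vecMul_injective_iff.2 h

theorem aux_step {n m : ℕ} (Kc : Set (Fin n → ℝ))
    (H : Matrix (Fin n) (Fin n) ℝ) (hH : H.PosDef) (x : Fin n → ℝ)
    (hDikin : ∀ y : Fin n → ℝ, locNorm H (y - x) < 1 → y ∈ interior Kc)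
    (A : Matrix (Fin m) (Fin n) ℝ) (b : Fin m → ℝ) (hA : A.rank = m)
    (hx : A *ᵥ x = b) (mk : Fin n → ℝ) (lam : Fin m → ℝ)
    (hlam : lam = -((A * H⁻¹ * Aᵀ)⁻¹ *ᵥ ((A * H⁻¹) *ᵥ mk)))
    (hnz : mk + Aᵀ *ᵥ lam ≠ 0) (t : ℝ) (ht0 : 0 < t) (ht1 : t < 1) :
    x - (t / dualNorm H (mk + Aᵀ *ᵥ lam)) • (H⁻¹ *ᵥ (mk + Aᵀ *ᵥ lam)) ∈ strictFeas Kc A b := by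
  have hM : (A * H⁻¹ * Aᵀ).PosDef := by
    simpa using hH.inv.mul_mul_conjTranspose_same (aux_vecMul_inj A hA)
  have hMu : IsUnit (A * H⁻¹ * Aᵀ).det := (Matrix.isUnit_iff_isUnit_det _).1 hM.isUnit
  have hHu : IsUnit H.det := (Matrix.isUnit_iff_isUnit_det _).1 hH.isUnit
  have hAd : A *ᵥ (H⁻¹ *ᵥ (mk + Aᵀ *ᵥ lam)) = 0 := by
    rw [Matrix.mulVec_add, Matrix.mulVec_add, Matrix.mulVec_mulVec, Matrix.mulVec_mulVec,
      Matrix.mulVec_mulVec, hlam, Matrix.mulVec_neg, Matrix.mulVec_mulVec,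
      Matrix.mul_nonsing_inv _ hMu, Matrix.one_mulVec, add_neg_cancel]
  generalize mk + Aᵀ *ᵥ lam = v at *
  have hq : 0 < v ⬝ᵥ (H⁻¹ *ᵥ v) := by simpa using hH.inv.dotProduct_mulVec_pos hnz
  have hd : 0 < dualNorm H v := Real.sqrt_pos.2 hq
  refine ⟨hDikin _ ?_, ?_⟩
  · have e : locNorm H (x - (t / dualNorm H v) • (H⁻¹ *ᵥ v) - x) = t := by
      have e2 : x - (t / dualNorm H v) • (H⁻¹ *ᵥ v) - x = -((t / dualNorm H v) • (H⁻¹ *ᵥ v)) := by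
        abel
      rw [e2, locNorm, Matrix.mulVec_neg, Matrix.mulVec_smul, Matrix.mulVec_mulVec,
        Matrix.mul_nonsing_inv _ hHu, Matrix.one_mulVec, neg_dotProduct_neg, smul_dotProduct,
        dotProduct_smul, dotProduct_comm, Real.sqrt_eq_iff_mul_self_eq_of_pos ht0]
      have hs : dualNorm H v ^ 2 = v ⬝ᵥ (H⁻¹ *ᵥ v) := Real.sq_sqrt hq.le
      rw [← hs]
      simp only [smul_eq_mul]
      field_simp
    rw [e]; exact ht1
  · rw [Matrix.mulVec_sub, Matrix.mulVec_smul, hAd, smul_zero, sub_zero, hx]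

/-- **Lemma 5** (SIPM-EM): the extrapolated points `z^k` are strictly feasible,
for every realization of the samples. -/
theorem stmt8 {n m : ℕ} {Ξ : Type}
    (Kc : Set (Fin n → ℝ))
    (hKconv : Convex ℝ Kc) (hKclosed : IsClosed Kc)
    (hKcone : ∀ t : ℝ, 0 < t → ∀ x ∈ Kc, t • x ∈ Kc)
    (hKpointed : ∀ x : Fin n → ℝ, x ∈ Kc → -x ∈ Kc → x = 0)
    (hKint : (interior Kc).Nonempty)
    (Bf : (Fin n → ℝ) → ℝ) (gradB : (Fin n → ℝ) → Fin n → ℝ)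
    (hessB : (Fin n → ℝ) → Matrix (Fin n) (Fin n) ℝ)
    (hBpos : ∀ x ∈ interior Kc, (hessB x).PosDef)
    (hDikin : ∀ x ∈ interior Kc, ∀ y : Fin n → ℝ,
      locNorm (hessB x) (y - x) < 1 → y ∈ interior Kc)
    (A : Matrix (Fin m) (Fin n) ℝ) (b : Fin m → ℝ) (hA : A.rank = m)
    (sη : ℝ) (hsη0 : 0 < sη) (hsη1 : sη < 1)
    (G : (Fin n → ℝ) → Ξ → Fin n → ℝ)
    (ξ : ℕ → Ξ)
    (η γ μk : ℕ → ℝ)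
    (hηpos : ∀ k, 0 < η k) (hηle : ∀ k, η k ≤ sη)
    (hγpos : ∀ k, 0 < γ k) (hγle : ∀ k, γ k ≤ 1)
    (hratio : ∀ k, η k / γ k ≤ sη)
    (hμpos : ∀ k, 0 < μk k) (hμle : ∀ k, μk k ≤ 1)
    (x0 : Fin n → ℝ) (hx0mem : x0 ∈ strictFeas Kc A b)
    (x z mbar mk : ℕ → Fin n → ℝ) (lam : ℕ → Fin m → ℝ)
    (hx0 : x 0 = x0)
    (hz0 : z 0 = x0)
    (hzrec : ∀ k, z (k + 1) = x (k + 1) + ((1 - γ k) / γ k) • (x (k + 1) - x k))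
    (hmbar0 : mbar 0 = G x0 (ξ 0))
    (hmbarrec : ∀ k, mbar (k + 1) =
      (1 - γ k) • mbar k + γ k • G (z (k + 1)) (ξ (k + 1)))
    (hmk : ∀ k, mk k = mbar k + μk k • (mbar k + gradB (x k)))
    (hlam : ∀ k, lam k =
      -((A * (hessB (x k))⁻¹ * Aᵀ)⁻¹ *ᵥ ((A * (hessB (x k))⁻¹) *ᵥ mk k)))
    (hnz : ∀ k, mk k + Aᵀ *ᵥ lam k ≠ 0)
    (hstep : ∀ k, x (k + 1) = x k -
      (η k / dualNorm (hessB (x k)) (mk k + Aᵀ *ᵥ lam k)) •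
        ((hessB (x k))⁻¹ *ᵥ (mk k + Aᵀ *ᵥ lam k))) :
    ∀ k : ℕ, z k ∈ strictFeas Kc A b := by
  have hxk : ∀ k, x k ∈ strictFeas Kc A b := by
    intro k
    induction k with
    | zero => rw [hx0]; exact hx0mem
    | succ k ih =>
      rw [hstep k]
      exact aux_step Kc _ (hBpos _ ih.1) _ (hDikin _ ih.1) A b hA ih.2 _ _ (hlam k) (hnz k) _
        (hηpos k) ((hηle k).trans_lt hsη1)
  intro k
  cases k with
  | zero => rw [hz0]; exact hx0mem
  | succ k =>
    have ih := hxk k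
    have key := aux_step Kc _ (hBpos _ ih.1) _ (hDikin _ ih.1) A b hA ih.2 _ _ (hlam k) (hnz k)
      (η k / γ k) (div_pos (hηpos k) (hγpos k)) ((hratio k).trans_lt hsη1)
    convert key using 1
    rw [hzrec k, hstep k]
    have hg := (hγpos k).ne'
    ext i
    simp only [Pi.add_apply, Pi.sub_apply, Pi.smul_apply, smul_eq_mul]
    field_simp
    ring
end
end

section
/- Let s_η ∈ (0,1) and for every integer k ≥ 0 define η_k = 5s_η/(7(k+1)^{5/7}), γ_k = 1/(k+1)^{4/7}, α_k = 1 − (1−γ_k)/(1−η_k), and p_k = (k+1)^{1/7}. Then for all k ≥ 0: α_k ≥ (1 − 5s_η/7)/(k+1)^{4/7} and (1 − α_k)p_{k+1} ≤ (1 − α_k/2)p_k. -/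
/-- **Lemma 7**: properties of the stepsize/momentum sequences for SIPM-EM. -/
theorem stmt11 (s : ℝ) (hs0 : 0 < s) (hs1 : s < 1)
    (η γ α p : ℕ → ℝ)
    (hη : ∀ k : ℕ, η k = 5 * s / (7 * ((k : ℝ) + 1) ^ ((5 : ℝ) / 7)))
    (hγ : ∀ k : ℕ, γ k = 1 / ((k : ℝ) + 1) ^ ((4 : ℝ) / 7))
    (hα : ∀ k : ℕ, α k = 1 - (1 - γ k) / (1 - η k))
    (hp : ∀ k : ℕ, p k = ((k : ℝ) + 1) ^ ((1 : ℝ) / 7)) :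
    ∀ k : ℕ,
      (1 - 5 * s / 7) / ((k : ℝ) + 1) ^ ((4 : ℝ) / 7) ≤ α k ∧
      (1 - α k) * p (k + 1) ≤ (1 - α k / 2) * p k := by
  intro k
  have hk : (0 : ℝ) ≤ (k : ℝ) := Nat.cast_nonneg k
  obtain ⟨x, hx⟩ : ∃ x : ℝ, x = ((k : ℝ) + 1) ^ ((1 : ℝ) / 7) := ⟨_, rfl⟩
  obtain ⟨y, hy⟩ : ∃ y : ℝ, y = (((k + 1 : ℕ) : ℝ) + 1) ^ ((1 : ℝ) / 7) := ⟨_, rfl⟩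
  have hx1 : 1 ≤ x := by
    rw [hx]; exact Real.one_le_rpow (by linarith) (by norm_num)
  have hx0 : 0 < x := by linarith
  have hx7 : x ^ 7 = (k : ℝ) + 1 := by
    rw [hx, ← Real.rpow_natCast, ← Real.rpow_mul (by linarith)]; norm_num
  have hx4 : ((k : ℝ) + 1) ^ ((4 : ℝ) / 7) = x ^ 4 := by
    rw [hx, ← Real.rpow_natCast, ← Real.rpow_mul (by linarith)]; norm_num
  have hx5 : ((k : ℝ) + 1) ^ ((5 : ℝ) / 7) = x ^ 5 := by
    rw [hx, ← Real.rpow_natCast, ← Real.rpow_mul (by linarith)]; norm_num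
  have hy0 : 0 ≤ y := by rw [hy]; positivity
  have hy7 : y ^ 7 = x ^ 7 + 1 := by
    rw [hx7, hy, ← Real.rpow_natCast, ← Real.rpow_mul (by positivity)]
    norm_num
  obtain ⟨c, hc⟩ : ∃ c : ℝ, c = 5 * s / 7 := ⟨_, rfl⟩
  have hc0 : 0 < c := by rw [hc]; positivity
  have hc1 : c < 5 / 7 := by rw [hc]; linarith
  have h5 : 1 ≤ x ^ 5 := one_le_pow₀ hx1
  have h4 : 1 ≤ x ^ 4 := one_le_pow₀ hx1
  have h3 : 1 ≤ x ^ 3 := one_le_pow₀ hx1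
  have hd : 0 < x ^ 5 - c := by linarith
  have e1 : α k = (x - c) / (x ^ 5 - c) := by
    have hη' : η k = c / x ^ 5 := by
      rw [hη, hx5, hc]; field_simp
    have hne : 1 - c / x ^ 5 ≠ 0 := by
      have : 1 - c / x ^ 5 = (x ^ 5 - c) / x ^ 5 := by field_simp
      rw [this]; positivity
    rw [hα, hη', hγ, hx4]
    have hd' := hd.ne'
    have h1 : 1 - c / x ^ 5 = (x ^ 5 - c) / x ^ 5 := by field_simp
    rw [h1]
    field_simp
    ring
  have h45 : x ^ 4 ≤ x ^ 5 := pow_le_pow_right₀ hx1 (by norm_num)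
  have hx5' : x ≤ x ^ 5 := le_self_pow₀ hx1 (by norm_num)
  have first : (1 - c) / x ^ 4 ≤ α k := by
    rw [e1, div_le_div_iff₀ (by positivity) hd]
    nlinarith [mul_nonneg hc0.le (by linarith : 0 ≤ x ^ 5 - x ^ 4 + 1 - c)]
  have ha1 : α k ≤ 1 := by
    rw [e1, div_le_one hd]; linarith
  refine ⟨by rw [hx4, ← hc]; exact first, ?_⟩
  rw [hp, hp, ← hx, ← hy]
  have hyx : y ≤ x + 1 / (7 * x ^ 6) := by
    refine le_of_pow_le_pow_left₀ (n := 7) (by norm_num) (by positivity) ?_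
    have hb := one_add_mul_le_pow (a := 1 / (7 * x ^ 7))
      (by have : 0 ≤ 1 / (7 * x ^ 7) := by positivity
          linarith) 7
    have e : x + 1 / (7 * x ^ 6) = x * (1 + 1 / (7 * x ^ 7)) := by field_simp
    rw [e, mul_pow, hy7]
    calc x ^ 7 + 1 = x ^ 7 * (1 + ((7 : ℕ) : ℝ) * (1 / (7 * x ^ 7))) := by
          push_cast; field_simp
      _ ≤ _ := by gcongr
  have ha : 1 - c ≤ α k * x ^ 4 := by
    rwa [div_le_iff₀ (by positivity)] at first
  have ha0 : 0 ≤ α k := by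
    refine le_trans ?_ first
    apply div_nonneg <;> [linarith; positivity]
  have key : 2 * (1 - α k) ≤ 7 * x ^ 7 * α k := by
    have : 2 ≤ 7 * (α k * x ^ 4) * x ^ 3 := by nlinarith
    nlinarith
  have key2 : (1 - α k) * (1 / (7 * x ^ 6)) ≤ α k * x / 2 := by
    rw [mul_one_div, div_le_iff₀ (by positivity)]
    nlinarith
  nlinarith [mul_le_mul_of_nonneg_left hyx (by linarith : 0 ≤ 1 - α k)]
end

section
/- Let s_η ∈ (0,1) and for every integer k ≥ 0 define η_k = s_η/(3(k+1)^{2/3}), γ_k = 1/(k+1)^{2/3}, α_k = 1 − (1−γ_k)/(1−η_k), and p_k = (k+1)^{1/3}. Then for all k ≥ 0: α_k ≥ (1 − s_η/3)/(k+1)^{2/3} and (1 − α_k)p_{k+1} ≤ (1 − α_k/2)p_k. -/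
/-- **Lemma 9**: properties of the stepsize/momentum sequences for SIPM-RM. -/
theorem stmt15 (s : ℝ) (hs0 : 0 < s) (hs1 : s < 1)
    (η γ α p : ℕ → ℝ)
    (hη : ∀ k : ℕ, η k = s / (3 * ((k : ℝ) + 1) ^ ((2 : ℝ) / 3)))
    (hγ : ∀ k : ℕ, γ k = 1 / ((k : ℝ) + 1) ^ ((2 : ℝ) / 3))
    (hα : ∀ k : ℕ, α k = 1 - (1 - γ k) / (1 - η k))
    (hp : ∀ k : ℕ, p k = ((k : ℝ) + 1) ^ ((1 : ℝ) / 3)) :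
    ∀ k : ℕ,
      (1 - s / 3) / ((k : ℝ) + 1) ^ ((2 : ℝ) / 3) ≤ α k ∧
      (1 - α k) * p (k + 1) ≤ (1 - α k / 2) * p k := by
  intro k
  have hk : (0 : ℝ) ≤ (k : ℝ) := Nat.cast_nonneg k
  have e2 : ((k : ℝ) + 1) ^ ((2 : ℝ) / 3) = (p k) ^ 2 := by
    rw [hp, ← Real.rpow_natCast, ← Real.rpow_mul (by positivity)]
    norm_num
  have e3 : (p k) ^ 3 = (k : ℝ) + 1 := by
    rw [hp, ← Real.rpow_natCast, ← Real.rpow_mul (by positivity)]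
    norm_num
  have e4 : (p (k + 1)) ^ 3 = (k : ℝ) + 1 + 1 := by
    rw [hp, ← Real.rpow_natCast, ← Real.rpow_mul (by positivity)]
    norm_num
  have hx1 : 1 ≤ p k := by
    rw [hp]
    exact Real.one_le_rpow (by linarith) (by norm_num)
  have hy0 : 0 ≤ p (k + 1) := by
    rw [hp]
    positivity
  have ha := hα k
  rw [hη, hγ, e2] at ha
  rw [e2]
  generalize p k = x at *
  generalize p (k + 1) = y at *
  generalize α k = a at *
  have hx0 : 0 < x := by linarith
  have hxx : 1 ≤ x ^ 2 := by nlinarith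
  have hD : 0 < 3 * x ^ 2 - s := by linarith
  have ha' : a = (3 - s) / (3 * x ^ 2 - s) := by
    have h1 : 1 - s / (3 * x ^ 2) = (3 * x ^ 2 - s) / (3 * x ^ 2) := by
      field_simp
    have h3 : 1 - 1 / x ^ 2 = (3 * x ^ 2 - 3) / (3 * x ^ 2) := by
      field_simp
    rw [ha, h1, h3, div_div_div_cancel_right₀ (by positivity), eq_div_iff hD.ne',
      sub_mul, div_mul_cancel₀ _ hD.ne']
    ring
  have hlow : (1 - s / 3) / x ^ 2 ≤ a := by
    rw [ha', div_le_div_iff₀ (by positivity) hD]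
    nlinarith
  refine ⟨hlow, ?_⟩
  have ha1 : a ≤ 1 := by
    rw [ha', div_le_one hD]
    linarith
  have h2 : 1 - s / 3 ≤ a * x ^ 2 := by
    rwa [div_le_iff₀ (by positivity)] at hlow
  have ha0 : 0 ≤ a := by
    rw [ha']
    exact div_nonneg (by linarith) hD.le
  have hxy : x ≤ y := by
    by_contra h
    push Not at h
    have := pow_le_pow_left₀ hy0 h.le 3
    linarith
  have hd : 3 * x ^ 2 * (y - x) ≤ 1 := by
    have h5 : (y - x) * (y ^ 2 + x * y + x ^ 2) = 1 := by
      linear_combination e4 - e3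
    have h6 : 0 ≤ (y - x) * (y ^ 2 + x * y + x ^ 2 - 3 * x ^ 2) :=
      mul_nonneg (by linarith) (by nlinarith)
    nlinarith
  have h7 : y - x ≤ a / 2 * x := by
    have h8 : 3 * x ^ 2 * (y - x) ≤ 3 * x ^ 2 * (a / 2 * x) := by
      have : a * x ^ 2 ≤ a * x ^ 2 * x := le_mul_of_one_le_right (by positivity) hx1
      nlinarith
    exact le_of_mul_le_mul_left h8 (by positivity)
  have h9 : 0 ≤ a * (y - x) := mul_nonneg ha0 (by linarith)
  nlinarith
end

section
/- Let {(x^k, λ^k)} be generated by Algorithm 1 with arbitrary estimator vectors m̄^k ∈ ℝ^n, step sizes {η_k} ⊂ (0, s_η] (s_η ∈ (0,1)), and barrier parameters {μ_k} ⊂ (0,1]. Then for every k ≥ 0: φ_{μ_k}(x^{k+1}) ≤ φ_{μ_k}(x^k) − η_k‖∇φ_{μ_k}(x^k) + Aᵀλ^k‖_{x^k}^* + 4η_k‖∇f(x^k) − m̄^k‖_{x^k}^* + (L_φ/2)η_k², where L_φ = 2L₁ + 1/(1 − s_η). -/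
open Matrix MeasureTheory ProbabilityTheory

noncomputable section

/-! ### Auxiliary lemmas -/

lemma aux_sym {n : ℕ} {M : Matrix (Fin n) (Fin n) ℝ} (hM : M.PosDef) (u v : Fin n → ℝ) :
    u ⬝ᵥ (M *ᵥ v) = v ⬝ᵥ (M *ᵥ u) := by
  have hT : Mᵀ = M := by
    have := hM.isHermitian.eq
    rwa [Matrix.conjTranspose_eq_transpose_of_trivial] at this
  rw [Matrix.dotProduct_mulVec, ← Matrix.mulVec_transpose, hT, dotProduct_comm]

lemma aux_nonneg {n : ℕ} {M : Matrix (Fin n) (Fin n) ℝ} (hM : M.PosDef) (u : Fin n → ℝ) :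
    0 ≤ u ⬝ᵥ (M *ᵥ u) := by
  have := hM.posSemidef.dotProduct_mulVec_nonneg u
  simpa using this

lemma aux_cs {n : ℕ} {M : Matrix (Fin n) (Fin n) ℝ} (hM : M.PosDef) (u v : Fin n → ℝ) :
    |u ⬝ᵥ (M *ᵥ v)| ≤ Real.sqrt (u ⬝ᵥ (M *ᵥ u)) * Real.sqrt (v ⬝ᵥ (M *ᵥ v)) := by
  have h : ∀ t : ℝ, 0 ≤ (v ⬝ᵥ (M *ᵥ v)) * (t * t) + (2 * (u ⬝ᵥ (M *ᵥ v))) * t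
      + u ⬝ᵥ (M *ᵥ u) := by
    intro t
    have h1 := aux_nonneg hM (u + t • v)
    have h2 := aux_sym hM u v
    simp only [Matrix.mulVec_add, Matrix.mulVec_smul, add_dotProduct, dotProduct_add,
      smul_dotProduct, dotProduct_smul, smul_eq_mul] at h1
    rw [← h2] at h1
    linarith
  have hd := discrim_le_zero h
  unfold discrim at hd
  rw [← Real.sqrt_mul (aux_nonneg hM u)]
  apply Real.abs_le_sqrt
  nlinarith

lemma dual_pair {n : ℕ} {H : Matrix (Fin n) (Fin n) ℝ} (hH : H.PosDef) (u v : Fin n → ℝ) :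
    |u ⬝ᵥ v| ≤ dualNorm H u * locNorm H v := by
  have hu : IsUnit H.det := (Matrix.isUnit_iff_isUnit_det H).1 hH.isUnit
  have h := aux_cs hH.inv u (H *ᵥ v)
  have e : H⁻¹ *ᵥ (H *ᵥ v) = v := by
    rw [Matrix.mulVec_mulVec, Matrix.nonsing_inv_mul _ hu, Matrix.one_mulVec]
  rw [e, dotProduct_comm (H *ᵥ v) v] at h
  exact h

lemma dual_add {n : ℕ} {H : Matrix (Fin n) (Fin n) ℝ} (hH : H.PosDef) (u v : Fin n → ℝ) :
    dualNorm H (u + v) ≤ dualNorm H u + dualNorm H v := by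
  have h := (abs_le.1 (aux_cs hH.inv u v)).2
  have h2 := aux_sym hH.inv u v
  have hu := Real.sq_sqrt (aux_nonneg hH.inv u)
  have hv := Real.sq_sqrt (aux_nonneg hH.inv v)
  unfold dualNorm
  apply Real.sqrt_le_iff.2
  refine ⟨by positivity, ?_⟩
  simp only [Matrix.mulVec_add, add_dotProduct, dotProduct_add]
  rw [← h2]
  nlinarith

lemma dual_smul {n : ℕ} (H : Matrix (Fin n) (Fin n) ℝ) (c : ℝ) (hc : 0 ≤ c) (v : Fin n → ℝ) :
    dualNorm H (c • v) = c * dualNorm H v := by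
  unfold dualNorm
  simp only [Matrix.mulVec_smul, smul_dotProduct, dotProduct_smul, smul_eq_mul]
  rw [← mul_assoc, Real.sqrt_mul (by positivity), Real.sqrt_mul_self hc]

lemma loc_smul {n : ℕ} (H : Matrix (Fin n) (Fin n) ℝ) (c : ℝ) (hc : 0 ≤ c) (v : Fin n → ℝ) :
    locNorm H (c • v) = c * locNorm H v := by
  unfold locNorm
  simp only [Matrix.mulVec_smul, smul_dotProduct, dotProduct_smul, smul_eq_mul]
  rw [← mul_assoc, Real.sqrt_mul (by positivity), Real.sqrt_mul_self hc]

lemma loc_neg {n : ℕ} (H : Matrix (Fin n) (Fin n) ℝ) (v : Fin n → ℝ) :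
    locNorm H (-v) = locNorm H v := by
  unfold locNorm
  simp [Matrix.mulVec_neg]

lemma loc_inv {n : ℕ} {H : Matrix (Fin n) (Fin n) ℝ} (hH : H.PosDef) (v : Fin n → ℝ) :
    locNorm H (H⁻¹ *ᵥ v) = dualNorm H v := by
  have hu : IsUnit H.det := (Matrix.isUnit_iff_isUnit_det H).1 hH.isUnit
  unfold locNorm dualNorm
  rw [Matrix.mulVec_mulVec, Matrix.mul_nonsing_inv _ hu, Matrix.one_mulVec, dotProduct_comm]

lemma dual_pos {n : ℕ} {H : Matrix (Fin n) (Fin n) ℝ} (hH : H.PosDef) {v : Fin n → ℝ}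
    (hv : v ≠ 0) : 0 < dualNorm H v := by
  apply Real.sqrt_pos.2
  have := hH.inv.dotProduct_mulVec_pos hv
  simpa using this

/-- The normal-equation matrix is invertible. -/
lemma aux_proj {n m : ℕ} {H : Matrix (Fin n) (Fin n) ℝ} (hH : H.PosDef)
    (A : Matrix (Fin m) (Fin n) ℝ) (hA : A.rank = m) (v : Fin n → ℝ) :
    A *ᵥ (H⁻¹ *ᵥ (v + Aᵀ *ᵥ (-((A * H⁻¹ * Aᵀ)⁻¹ *ᵥ ((A * H⁻¹) *ᵥ v))))) = 0 := by
  have hli : LinearIndependent ℝ A.row := by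
    rw [linearIndependent_iff_card_eq_finrank_span, Fintype.card_fin,
      Set.finrank, ← Matrix.rank_eq_finrank_span_row, hA]
  have hinj : Function.Injective A.vecMul := Matrix.vecMul_injective_iff.2 hli
  have hpd : (A * H⁻¹ * Aᴴ).PosDef := hH.inv.mul_mul_conjTranspose_same hinj
  rw [Matrix.conjTranspose_eq_transpose_of_trivial] at hpd
  have hu : IsUnit (A * H⁻¹ * Aᵀ).det := (Matrix.isUnit_iff_isUnit_det _).1 hpd.isUnit
  rw [Matrix.mulVec_mulVec, Matrix.mulVec_add, Matrix.mulVec_mulVec, Matrix.mulVec_neg,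
    Matrix.mulVec_mulVec, Matrix.mul_nonsing_inv _ hu, Matrix.one_mulVec, add_neg_cancel]

/-- One-dimensional descent inequality. -/
lemma aux_descent (g g' : ℝ → ℝ) (a c : ℝ)
    (hg : ∀ t ∈ Set.Icc (0 : ℝ) 1, HasDerivAt g (g' t) t)
    (hb : ∀ t ∈ Set.Icc (0 : ℝ) 1, g' t ≤ a + c * t) :
    g 1 ≤ g 0 + a + c / 2 := by
  have hd : ∀ t ∈ Set.Icc (0 : ℝ) 1,
      HasDerivAt (fun t => g t - (a * t + c / 2 * t ^ 2)) (g' t - (a + c * t)) t := by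
    intro t ht
    have h1 : HasDerivAt (fun t : ℝ => a * t + c / 2 * t ^ 2) (a + c * t) t := by
      have := ((hasDerivAt_id t).const_mul a).add (((hasDerivAt_id t).pow 2).const_mul (c / 2))
      refine this.congr_deriv ?_
      simp only [id_eq, Nat.cast_ofNat, mul_one]
      ring
    exact (hg t ht).sub h1
  have hanti : AntitoneOn (fun t => g t - (a * t + c / 2 * t ^ 2)) (Set.Icc (0 : ℝ) 1) := by
    apply antitoneOn_of_deriv_nonpos (convex_Icc 0 1)
    · exact fun t ht => (hd t ht).continuousAt.continuousWithinAt
    · exact fun t ht => (hd t (interior_subset ht)).differentiableAt.differentiableWithinAt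
    · intro t ht
      rw [(hd t (interior_subset ht)).deriv]
      linarith [hb t (interior_subset ht)]
  have := hanti (Set.left_mem_Icc.2 zero_le_one) (Set.right_mem_Icc.2 zero_le_one) zero_le_one
  simp at this
  linarith

/-- **Lemma 11**: one-step descent of the perturbed barrier function along Algorithm 1. -/
theorem stmt18 {n m : ℕ}
    (Kc : Set (Fin n → ℝ))
    (hKconv : Convex ℝ Kc) (hKclosed : IsClosed Kc)
    (hKcone : ∀ t : ℝ, 0 < t → ∀ x ∈ Kc, t • x ∈ Kc)
    (hKpointed : ∀ x : Fin n → ℝ, x ∈ Kc → -x ∈ Kc → x = 0)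
    (hKint : (interior Kc).Nonempty)
    (Bf : (Fin n → ℝ) → ℝ) (gradB : (Fin n → ℝ) → Fin n → ℝ)
    (hessB : (Fin n → ℝ) → Matrix (Fin n) (Fin n) ℝ)
    (hBpos : ∀ x ∈ interior Kc, (hessB x).PosDef)
    (hB' : ∀ x ∈ interior Kc, ∃ L : (Fin n → ℝ) →L[ℝ] ℝ,
      HasFDerivAt Bf L x ∧ ∀ v, L v = gradB x ⬝ᵥ v)
    (hDikin : ∀ x ∈ interior Kc, ∀ y : Fin n → ℝ,
      locNorm (hessB x) (y - x) < 1 → y ∈ interior Kc)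
    (hBLip : ∀ s : ℝ, 0 < s → s < 1 → ∀ x ∈ interior Kc, ∀ y ∈ interior Kc,
      locNorm (hessB x) (y - x) ≤ s →
      dualNorm (hessB x) (gradB y - gradB x) ≤ locNorm (hessB x) (y - x) / (1 - s))
    (A : Matrix (Fin m) (Fin n) ℝ) (b : Fin m → ℝ) (hA : A.rank = m)
    (f : (Fin n → ℝ) → ℝ) (Gf : (Fin n → ℝ) → Fin n → ℝ)
    (hf' : ∀ x ∈ strictFeas Kc A b, ∃ L : (Fin n → ℝ) →L[ℝ] ℝ,
      HasFDerivAt f L x ∧ ∀ v, L v = Gf x ⬝ᵥ v)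
    (sη : ℝ) (hsη0 : 0 < sη) (hsη1 : sη < 1)
    (L1 : ℝ) (hL1 : 0 < L1)
    (hGfLip : ∀ x ∈ strictFeas Kc A b, ∀ y ∈ strictFeas Kc A b,
      locNorm (hessB x) (y - x) ≤ sη →
      dualNorm (hessB x) (Gf y - Gf x) ≤ L1 * locNorm (hessB x) (y - x))
    (η μk : ℕ → ℝ)
    (hηpos : ∀ k, 0 < η k) (hηle : ∀ k, η k ≤ sη)
    (hμpos : ∀ k, 0 < μk k) (hμle : ∀ k, μk k ≤ 1)
    (x mbar mk : ℕ → Fin n → ℝ) (lam : ℕ → Fin m → ℝ)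
    (hx0 : x 0 ∈ strictFeas Kc A b)
    (hmk : ∀ k, mk k = mbar k + μk k • (mbar k + gradB (x k)))
    (hlam : ∀ k, lam k =
      -((A * (hessB (x k))⁻¹ * Aᵀ)⁻¹ *ᵥ ((A * (hessB (x k))⁻¹) *ᵥ mk k)))
    (hnz : ∀ k, mk k + Aᵀ *ᵥ lam k ≠ 0)
    (hstep : ∀ k, x (k + 1) = x k -
      (η k / dualNorm (hessB (x k)) (mk k + Aᵀ *ᵥ lam k)) •
        ((hessB (x k))⁻¹ *ᵥ (mk k + Aᵀ *ᵥ lam k))) :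
    ∀ k : ℕ,
      phiMu f Bf (μk k) (x (k + 1)) ≤ phiMu f Bf (μk k) (x k)
        - η k * dualNorm (hessB (x k))
            (gradPhiMu Gf gradB (μk k) (x k) + Aᵀ *ᵥ lam k)
        + 4 * η k * dualNorm (hessB (x k)) (Gf (x k) - mbar k)
        + ((2 * L1 + 1 / (1 - sη)) / 2) * η k ^ 2 := by
  have hdloc : ∀ k, x k ∈ interior Kc → locNorm (hessB (x k)) (x (k + 1) - x k) = η k := by
    intro k hk
    have hN := dual_pos (hBpos _ hk) (hnz k)
    have e : x (k + 1) - x k =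
      -((η k / dualNorm (hessB (x k)) (mk k + Aᵀ *ᵥ lam k)) •
        ((hessB (x k))⁻¹ *ᵥ (mk k + Aᵀ *ᵥ lam k))) := by
      rw [hstep k]; abel
    rw [e, loc_neg, loc_smul _ _ (div_nonneg (hηpos k).le hN.le), loc_inv (hBpos _ hk)]
    field_simp
  have hAd : ∀ k, x k ∈ interior Kc → A *ᵥ (x (k + 1) - x k) = 0 := by
    intro k hk
    have h := aux_proj (hBpos _ hk) A hA (mk k)
    rw [← hlam k] at h
    rw [hstep k, sub_sub_cancel_left, Matrix.mulVec_neg, Matrix.mulVec_smul, h]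
    simp
  have hseg : ∀ k, x k ∈ strictFeas Kc A b → ∀ t ∈ Set.Icc (0 : ℝ) 1,
      x k + t • (x (k + 1) - x k) ∈ strictFeas Kc A b := by
    intro k hk t ht
    refine ⟨hDikin _ hk.1 _ ?_, ?_⟩
    · rw [add_sub_cancel_left, loc_smul _ _ ht.1, hdloc k hk.1]
      nlinarith [ht.1, ht.2, hηpos k, hηle k]
    · rw [Matrix.mulVec_add, Matrix.mulVec_smul, hAd k hk.1, hk.2]
      simp
  have hfeas : ∀ k, x k ∈ strictFeas Kc A b := by
    intro k
    induction k with
    | zero => exact hx0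
    | succ k ih =>
      have := hseg k ih 1 (Set.right_mem_Icc.2 zero_le_one)
      simpa using this
  intro k
  have hk := hfeas k
  have hH := hBpos _ hk.1
  have hη := hηpos k
  have hμ0 := hμpos k
  have hμ1 := hμle k
  have hs : 0 < 1 - sη := by linarith
  have hloc := hdloc k hk.1
  set d := x (k + 1) - x k with hd
  set H := hessB (x k) with hHdef
  set e := Gf (x k) - mbar k with he
  set g := mk k + Aᵀ *ᵥ lam k with hg
  set G := gradPhiMu Gf gradB (μk k) (x k) with hG
  have hx1 : x (k + 1) = x k + d := by rw [hd]; abel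
  -- descent inequality
  have hdesc : phiMu f Bf (μk k) (x (k + 1)) ≤ phiMu f Bf (μk k) (x k) + G ⬝ᵥ d
      + ((2 * L1 + 1 / (1 - sη)) * η k ^ 2) / 2 := by
    have key := aux_descent (fun t => phiMu f Bf (μk k) (x k + t • d))
      (fun t => gradPhiMu Gf gradB (μk k) (x k + t • d) ⬝ᵥ d) (G ⬝ᵥ d)
      ((2 * L1 + 1 / (1 - sη)) * η k ^ 2) ?_ ?_
    · simpa [hx1] using key
    · intro t ht
      have hy := hseg k hk t ht
      obtain ⟨Lf, hLf, hLf'⟩ := hf' _ hy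
      obtain ⟨LB, hLB, hLB'⟩ := hB' _ hy.1
      have hl : HasDerivAt (fun t : ℝ => x k + t • d) d t := by
        simpa using ((hasDerivAt_id t).smul_const d).const_add (x k)
      have h1 := hLf.comp_hasDerivAt t hl
      have h2 := hLB.comp_hasDerivAt t hl
      have h3 := h1.add ((h1.add h2).const_mul (μk k))
      refine h3.congr_deriv ?_
      rw [hLf', hLB']
      simp only [gradPhiMu, add_dotProduct, smul_dotProduct, smul_eq_mul]
      ring
    · intro t ht
      have hy := hseg k hk t ht
      have hyl : locNorm H (x k + t • d - x k) = t * η k := by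
        rw [add_sub_cancel_left, loc_smul _ _ ht.1, hloc]
      have hyle : locNorm H (x k + t • d - x k) ≤ sη := by
        rw [hyl]; nlinarith [ht.1, ht.2, hηle k]
      have h1 := hGfLip _ hk _ hy hyle
      have h2 := hBLip sη hsη0 hsη1 _ hk.1 _ hy.1 hyle
      rw [hyl] at h1 h2
      have p1 := (abs_le.1 (dual_pair hH (Gf (x k + t • d) - Gf (x k)) d)).2
      have p2 := (abs_le.1 (dual_pair hH (gradB (x k + t • d) - gradB (x k)) d)).2
      rw [hloc] at p1 p2
      have q1 : (Gf (x k + t • d) - Gf (x k)) ⬝ᵥ d ≤ L1 * (t * η k) * η k :=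
        p1.trans (mul_le_mul_of_nonneg_right h1 hη.le)
      have q2 : (gradB (x k + t • d) - gradB (x k)) ⬝ᵥ d ≤ t * η k / (1 - sη) * η k :=
        p2.trans (mul_le_mul_of_nonneg_right h2 hη.le)
      have r1 : (1 + μk k) * ((Gf (x k + t • d) - Gf (x k)) ⬝ᵥ d)
          ≤ 2 * (L1 * (t * η k) * η k) := by
        have : 0 ≤ L1 * (t * η k) * η k := by have := ht.1; positivity
        nlinarith
      have r2 : μk k * ((gradB (x k + t • d) - gradB (x k)) ⬝ᵥ d)
          ≤ t * η k / (1 - sη) * η k := by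
        have : 0 ≤ t * η k / (1 - sη) * η k := by have := ht.1; positivity
        nlinarith
      have e1 : gradPhiMu Gf gradB (μk k) (x k + t • d) ⬝ᵥ d = G ⬝ᵥ d
          + (1 + μk k) * ((Gf (x k + t • d) - Gf (x k)) ⬝ᵥ d)
          + μk k * ((gradB (x k + t • d) - gradB (x k)) ⬝ᵥ d) := by
        simp only [hG, gradPhiMu, add_dotProduct, sub_dotProduct, smul_dotProduct, smul_eq_mul]
        ring
      have e2 : (2 * L1 + 1 / (1 - sη)) * η k ^ 2 * t
          = 2 * (L1 * (t * η k) * η k) + t * η k / (1 - sη) * η k := by ring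
      show gradPhiMu Gf gradB (μk k) (x k + t • d) ⬝ᵥ d ≤ _
      rw [e1, e2]
      linarith
  -- direction
  have hN : 0 < dualNorm H g := dual_pos hH (hnz k)
  have hgd : g ⬝ᵥ d = -(η k * dualNorm H g) := by
    have hd2 : d = -((η k / dualNorm H g) • (H⁻¹ *ᵥ g)) := by
      rw [hd, hstep k, sub_sub_cancel_left]
    have hsq : g ⬝ᵥ (H⁻¹ *ᵥ g) = dualNorm H g ^ 2 :=
      (Real.sq_sqrt (aux_nonneg hH.inv g)).symm
    rw [hd2, dotProduct_neg, dotProduct_smul, hsq, smul_eq_mul]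
    field_simp
  have hGm : G = mk k + (1 + μk k) • e := by
    rw [hG, hmk k, he, gradPhiMu]
    module
  have hAl : (Aᵀ *ᵥ lam k) ⬝ᵥ d = 0 := by
    rw [Matrix.mulVec_transpose, ← Matrix.dotProduct_mulVec, hAd k hk.1, dotProduct_zero]
  have hGd : G ⬝ᵥ d = -(η k * dualNorm H g) + (1 + μk k) * (e ⬝ᵥ d) := by
    rw [← hgd, hGm, hg, add_dotProduct, add_dotProduct, hAl, smul_dotProduct, smul_eq_mul]
    ring
  have hed := (abs_le.1 (dual_pair hH e d)).2
  rw [hloc] at hed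
  have hE : 0 ≤ dualNorm H e := Real.sqrt_nonneg _
  have htri : dualNorm H (G + Aᵀ *ᵥ lam k) ≤ dualNorm H g + (1 + μk k) * dualNorm H e := by
    have : G + Aᵀ *ᵥ lam k = g + (1 + μk k) • e := by rw [hGm, hg]; abel
    rw [this, ← dual_smul H (1 + μk k) (by linarith) e]
    exact dual_add hH _ _
  have t1 : (1 + μk k) * (e ⬝ᵥ d) ≤ 2 * (dualNorm H e * η k) := by
    have : 0 ≤ dualNorm H e * η k := by positivity
    nlinarith
  have t2 : dualNorm H (G + Aᵀ *ᵥ lam k) ≤ dualNorm H g + 2 * dualNorm H e := by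
    nlinarith
  have t3 := mul_le_mul_of_nonneg_left t2 hη.le
  rw [hGd] at hdesc
  linarith
end
end

section
/- Let β ∈ (0,1) and u ∈ (0, 1/e). Then for every real v ≥ ((1/u)·ln(1/u))^{1/β} it holds that v^{−β}·ln v ≤ 2u/β. -/
/-- **Lemma 12**: a polylogarithmic threshold estimate. -/
theorem stmt19 (β u : ℝ) (hβ0 : 0 < β) (hβ1 : β < 1)
    (hu0 : 0 < u) (hu1 : u < 1 / Real.exp 1) :
    ∀ v : ℝ, (1 / u * Real.log (1 / u)) ^ ((1 : ℝ) / β) ≤ v →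
      v ^ (-β) * Real.log v ≤ 2 * u / β := by
  intro v hv
  have he : Real.exp 1 < 1 / u := by
    rw [lt_div_iff₀ hu0]
    rw [lt_div_iff₀ (Real.exp_pos 1)] at hu1
    linarith
  have hiu : 0 < 1 / u := by positivity
  have hL : 1 < Real.log (1 / u) := (Real.lt_log_iff_exp_lt hiu).2 he
  set L := Real.log (1 / u) with hLdef
  have hL0 : 0 < L := by linarith
  have hA0 : 0 < 1 / u * L := by positivity
  have hAe : Real.exp 1 ≤ 1 / u * L := by nlinarith
  have hv0 : 0 < v := lt_of_lt_of_le (Real.rpow_pos_of_pos hA0 _) hv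
  have hw0 : 0 < v ^ β := Real.rpow_pos_of_pos hv0 _
  have hAw : 1 / u * L ≤ v ^ β := by
    have h := Real.rpow_le_rpow (Real.rpow_pos_of_pos hA0 _).le hv hβ0.le
    rwa [← Real.rpow_mul hA0.le, one_div_mul_cancel hβ0.ne', Real.rpow_one] at h
  have hm : Real.log (v ^ β) / v ^ β ≤ Real.log (1 / u * L) / (1 / u * L) :=
    Real.log_div_self_antitoneOn hAe (hAe.trans hAw) hAw
  have hlog : Real.log (1 / u * L) ≤ 2 * L := by
    rw [Real.log_mul hiu.ne' hL0.ne', ← hLdef]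
    have := Real.log_le_sub_one_of_pos hL0
    linarith
  have hb : Real.log (1 / u * L) / (1 / u * L) ≤ 2 * u := by
    rw [div_le_iff₀ hA0]
    have : 2 * u * (1 / u * L) = 2 * L := by field_simp
    linarith
  have hf := hm.trans hb
  rw [Real.log_rpow hv0] at hf
  rw [le_div_iff₀ hβ0, Real.rpow_neg hv0.le]
  calc (v ^ β)⁻¹ * Real.log v * β = β * Real.log v / v ^ β := by ring
    _ ≤ _ := hf
end
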